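/- First reduction step is exact (Fmac_arg_reduct_correct1): Assume p > 3, x is a p-bit FPN, R is a positive normal p-bit FPN, q is an integer with 2 ≤ q < p − 1, C₁ is a round-to-nearest of 1/R to p − q bits, C₁ is not exactly a power of 2 (C₁ ≠ 2^j for every integer j), C₁ ≥ 2^(p−q+max(1,N−1))·λ, ℓ is an integer with 2 ≤ ℓ ≤ p − 1 and q ≤ ℓ, z is a real such that z·2^N is an integer with 2^(ℓ−1) ≤ |z·2^N| < 2^ℓ, and |x·R − z| ≤ 2^(−N−1). Then x − z·C₁ is a p-bit FPN. -/

import Mathlib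

noncomputable section

/-- `x` is a `k`-bit (binary) floating-point number with minimal exponent `emin`:
there exist integers `m`, `e` with `|m| < 2^k`, `e ≥ emin` and `x = m·2^e`. -/
def IsFPN (emin k : ℤ) (x : ℝ) : Prop :=
  ∃ m e : ℤ, |(m : ℝ)| < (2 : ℝ) ^ k ∧ emin ≤ e ∧ x = (m : ℝ) * (2 : ℝ) ^ e

/-- `x` is a normal `p`-bit floating-point number: it admits a representation
with `2^(p-1) ≤ |m| < 2^p`. -/
def IsNormalFPN (emin p : ℤ) (x : ℝ) : Prop :=
  ∃ m e : ℤ, (2 : ℝ) ^ (p - 1) ≤ |(m : ℝ)| ∧ |(m : ℝ)| < (2 : ℝ) ^ p ∧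
    emin ≤ e ∧ x = (m : ℝ) * (2 : ℝ) ^ e

/-- `r` is a round-to-nearest of `a` to `k` bits (ties broken in any way). -/
def RN (emin k : ℤ) (a r : ℝ) : Prop :=
  IsFPN emin k r ∧ ∀ y : ℝ, IsFPN emin k y → |a - r| ≤ |a - y|

/-- Unit in the last place at precision `p`: `ulp(x) = 2^(⌊log₂|x|⌋ - p + 1)`. -/
def ulp (p : ℤ) (x : ℝ) : ℝ := (2 : ℝ) ^ (Int.log 2 |x| - p + 1)

/-! Every number involved is an integer multiple of a power of two, and an integer multiple of
`2 ^ e` of absolute value at most `2 ^ (p + e)` is a `p`-bit number as soon as `emin ≤ e`. Write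
`2 ^ c ≤ |C₁| < 2 ^ (c + 1)`. Since `x` is close to `z / R`, which is close to `z * C₁`, the size of
`z` bounds `|x|`, and therefore the exponent of `x`, from below; so `x` and `z * C₁` are multiples
of `2 ^ e` for an explicit `e`. The identity `x - z * C₁ = (x - z / R) + z * (1 / R - C₁)` then
bounds the difference by `(1 + 2 ^ (ℓ - (p - q))) * 2 ^ (c - N)`, which is at most `2 ^ (p + e)`. -/

open AddSubgroup (zmultiples mem_zmultiples mem_zmultiples_iff)

lemma mul_mem_zmultiples_mul {A : Type*} [NonUnitalNonAssocRing A] {u v x y : A}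
    (hx : x ∈ zmultiples u) (hy : y ∈ zmultiples v) : x * y ∈ zmultiples (u * v) := by
  obtain ⟨m, rfl⟩ := mem_zmultiples_iff.1 hx
  obtain ⟨n, rfl⟩ := mem_zmultiples_iff.1 hy
  exact mem_zmultiples_iff.2 ⟨m * n, (smul_mul_smul_comm m u n v).symm⟩

lemma add_le_of_lt_of_mem_zmultiples {G : Type*} [AddCommGroup G] [LinearOrder G]
    [IsOrderedAddMonoid G] {u x y : G} (hu : 0 < u) (hx : x ∈ zmultiples u)
    (hy : y ∈ zmultiples u) (hxy : x < y) : x + u ≤ y := by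
  obtain ⟨m, rfl⟩ := mem_zmultiples_iff.1 hx
  obtain ⟨n, rfl⟩ := mem_zmultiples_iff.1 hy
  rw [← add_one_zsmul]
  exact zsmul_le_zsmul_left hu.le ((zsmul_lt_zsmul_iff_left hu).1 hxy)

lemma zmultiples_two_zpow_le {s t : ℤ} (hst : s ≤ t) :
    zmultiples ((2 : ℝ) ^ t) ≤ zmultiples ((2 : ℝ) ^ s) := by
  obtain ⟨d, rfl⟩ := Int.le.dest hst
  rw [AddSubgroup.zmultiples_le, mem_zmultiples_iff]
  refine ⟨2 ^ d, ?_⟩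
  rw [zsmul_eq_mul, zpow_add₀ two_ne_zero, zpow_natCast, mul_comm]
  push_cast
  rfl

lemma one_add_two_zpow_le {m n : ℤ} (hn : 0 < n) (hmn : m < n) :
    1 + (2 : ℝ) ^ m ≤ 2 ^ n := by
  have h_one : (1 : ℝ) ≤ 2 ^ (n - 1) := one_le_zpow₀ one_le_two (by lia)
  have h_two : (2 : ℝ) ^ m ≤ 2 ^ (n - 1) := zpow_le_zpow_right₀ one_le_two (by lia)
  calc 1 + (2 : ℝ) ^ m ≤ 2 ^ (n - 1) * 2 := by linarith
    _ = 2 ^ n := by rw [← zpow_add_one₀ two_ne_zero, sub_add_cancel]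

lemma two_zpow_log_le_abs {x : ℝ} (hx : x ≠ 0) : (2 : ℝ) ^ Int.log 2 |x| ≤ |x| :=
  mod_cast Int.zpow_log_le_self one_lt_two (abs_pos.2 hx)

lemma abs_lt_two_zpow_log_add_one (x : ℝ) : |x| < (2 : ℝ) ^ (Int.log 2 |x| + 1) :=
  mod_cast Int.lt_zpow_succ_log_self one_lt_two |x|

lemma le_log_of_two_zpow_le {x : ℝ} {t : ℤ} (h : (2 : ℝ) ^ t ≤ x) : t ≤ Int.log 2 x :=
  (Int.zpow_le_iff_le_log one_lt_two ((by positivity : (0 : ℝ) < 2 ^ t).trans_le h)).1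
    (mod_cast h)

lemma ulp_pos (k : ℤ) (x : ℝ) : 0 < ulp k x := zpow_pos two_pos _

lemma isFPN_of_mem_zmultiples {emin k e : ℤ} {x : ℝ} (hk : 0 < k) (he : emin ≤ e)
    (hx : x ∈ zmultiples ((2 : ℝ) ^ e)) (hle : |x| ≤ (2 : ℝ) ^ (k + e)) : IsFPN emin k x := by
  obtain ⟨m, rfl⟩ := mem_zmultiples_iff.1 hx
  have hm : |(m : ℝ)| ≤ 2 ^ k := by
    rw [zsmul_eq_mul, abs_mul, abs_of_pos (by positivity : (0 : ℝ) < 2 ^ e),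
      zpow_add₀ two_ne_zero] at hle
    exact le_of_mul_le_mul_right hle (by positivity)
  rcases hm.lt_or_eq with hlt | heq
  · exact ⟨m, e, hlt, he, zsmul_eq_mul _ _⟩
  · have h_one : (1 : ℝ) < 2 ^ k := one_lt_zpow₀ one_lt_two hk
    rw [zsmul_eq_mul]
    rcases (abs_eq (by positivity)).1 heq with h | h
    · exact ⟨1, k + e, by simpa using h_one, by lia, by rw [h, zpow_add₀ two_ne_zero]; simp⟩
    · exact ⟨-1, k + e, by simpa using h_one, by lia, by rw [h, zpow_add₀ two_ne_zero]; simp⟩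

lemma IsFPN.mem_zmultiples_two_zpow {emin k t : ℤ} {x : ℝ} (hx : IsFPN emin k x)
    (ht : (2 : ℝ) ^ t ≤ |x|) : x ∈ zmultiples ((2 : ℝ) ^ max emin (t - k + 1)) := by
  obtain ⟨m, e, hm, he, rfl⟩ := hx
  have hte : t < k + e := by
    rw [abs_mul, abs_of_pos (by positivity : (0 : ℝ) < 2 ^ e)] at ht
    refine (zpow_lt_zpow_iff_right₀ (one_lt_two (α := ℝ))).1 (ht.trans_lt ?_)
    rw [zpow_add₀ two_ne_zero]
    gcongr
  exact zmultiples_two_zpow_le (by lia : max emin (t - k + 1) ≤ e)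
    (mem_zmultiples_iff.2 ⟨m, zsmul_eq_mul _ _⟩)

lemma IsFPN.mem_zmultiples_ulp {emin k : ℤ} {x : ℝ} (hx : IsFPN emin k x) :
    x ∈ zmultiples (ulp k x) := by
  rcases eq_or_ne x 0 with rfl | hx0
  · exact zero_mem _
  · exact zmultiples_two_zpow_le (le_max_right _ _)
      (hx.mem_zmultiples_two_zpow (two_zpow_log_le_abs hx0))

lemma IsFPN.abs_add_ulp_le {emin k : ℤ} {x : ℝ} (hk : 0 ≤ k) (hx : IsFPN emin k x) :
    |x| + ulp k x ≤ (2 : ℝ) ^ (Int.log 2 |x| + 1) :=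
  add_le_of_lt_of_mem_zmultiples (ulp_pos k x) (abs_mem_iff.2 hx.mem_zmultiples_ulp)
    (zmultiples_two_zpow_le (by lia) (mem_zmultiples _)) (abs_lt_two_zpow_log_add_one x)

lemma IsFPN.add_of_abs_eq_ulp {emin k : ℤ} {x d : ℝ} (hk : 0 < k) (hx : IsFPN emin k x)
    (hnormal : (2 : ℝ) ^ (k - 1 + emin) ≤ |x|) (hd : |d| = ulp k x) : IsFPN emin k (x + d) := by
  have hlog := le_log_of_two_zpow_le hnormal
  have hd_mem : d ∈ zmultiples (ulp k x) := abs_mem_iff.1 (hd ▸ mem_zmultiples _)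
  refine isFPN_of_mem_zmultiples hk (by lia) (add_mem hx.mem_zmultiples_ulp hd_mem) ?_
  calc |x + d| ≤ |x| + ulp k x := hd ▸ abs_add_le x d
    _ ≤ 2 ^ (Int.log 2 |x| + 1) := hx.abs_add_ulp_le hk.le
    _ = 2 ^ (k + (Int.log 2 |x| - k + 1)) := by congr 1; ring

lemma abs_sub_le_half_of_le_neighbors {a r h : ℝ} (hh : 0 < h)
    (hadd : |a - r| ≤ |a - (r + h)|) (hsub : |a - r| ≤ |a - (r - h)|) : |a - r| ≤ h / 2 := by
  have hadd_sq := sq_le_sq.2 hadd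
  have hsub_sq := sq_le_sq.2 hsub
  rw [abs_le]
  constructor
  · exact le_of_mul_le_mul_right (by linarith : -(h / 2) * h ≤ (a - r) * h) hh
  · exact le_of_mul_le_mul_right (by linarith : (a - r) * h ≤ h / 2 * h) hh

section RoundToNearest

variable {emin k : ℤ} {a r : ℝ}

lemma RN.abs_sub_le_half_ulp (hk : 0 < k) (h : RN emin k a r)
    (hnormal : (2 : ℝ) ^ (k - 1 + emin) ≤ |r|) : |a - r| ≤ ulp k r / 2 := by
  have hpos := ulp_pos k r
  refine abs_sub_le_half_of_le_neighbors hpos (h.2 _ ?_) (h.2 _ ?_)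
  · exact h.1.add_of_abs_eq_ulp hk hnormal (abs_of_pos hpos)
  · rw [sub_eq_add_neg]
    exact h.1.add_of_abs_eq_ulp hk hnormal (by rw [abs_neg, abs_of_pos hpos])

lemma RN.abs_le_two_zpow_log_add_one (hk : 0 < k) (h : RN emin k a r)
    (hnormal : (2 : ℝ) ^ (k - 1 + emin) ≤ |r|) : |a| ≤ (2 : ℝ) ^ (Int.log 2 |r| + 1) := by
  linarith [h.abs_sub_le_half_ulp hk hnormal, h.1.abs_add_ulp_le hk.le, ulp_pos k r,
    abs_sub_abs_le_abs_sub a r]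

lemma RN.three_quarters_two_zpow_log_le_abs (hk : 2 ≤ k) (h : RN emin k a r)
    (hnormal : (2 : ℝ) ^ (k - 1 + emin) ≤ |r|) : 3 / 4 * (2 : ℝ) ^ Int.log 2 |r| ≤ |a| := by
  have hr : r ≠ 0 := abs_pos.1 ((by positivity : (0 : ℝ) < 2 ^ (k - 1 + emin)).trans_le hnormal)
  have hulp : ulp k r ≤ 2 ^ Int.log 2 |r| / 2 := by
    rw [div_eq_mul_inv, ← zpow_sub_one₀ two_ne_zero, ulp]
    exact zpow_le_zpow_right₀ one_le_two (by lia)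
  have htri := abs_sub_abs_le_abs_sub r a
  rw [abs_sub_comm] at htri
  linarith [h.abs_sub_le_half_ulp (by lia) hnormal, two_zpow_log_le_abs hr]

lemma RN.ne_zero (hk : 2 ≤ k) (h : RN emin k a r)
    (hnormal : (2 : ℝ) ^ (k - 1 + emin) ≤ |r|) : a ≠ 0 := by
  have ha := h.three_quarters_two_zpow_log_le_abs hk hnormal
  exact abs_pos.1 ((by positivity : (0 : ℝ) < 3 / 4 * 2 ^ Int.log 2 |r|).trans_le ha)

lemma RN.abs_sub_mul_le {s x z : ℝ} (hs : 0 ≤ s) (hk : 0 < k) (h : RN emin k a r)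
    (hnormal : (2 : ℝ) ^ (k - 1 + emin) ≤ |r|) (hx : |x - z * a| ≤ s / 2 * |a|) :
    |x - z * r| ≤ s * (2 : ℝ) ^ Int.log 2 |r| + |z| * (ulp k r / 2) := by
  calc |x - z * r| = |(x - z * a) + z * (a - r)| := by ring_nf
    _ ≤ |x - z * a| + |z| * |a - r| := by rw [← abs_mul]; exact abs_add_le _ _
    _ ≤ s / 2 * |a| + |z| * (ulp k r / 2) := by
        gcongr; exact h.abs_sub_le_half_ulp hk hnormal
    _ ≤ s / 2 * 2 ^ (Int.log 2 |r| + 1) + |z| * (ulp k r / 2) := by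
        gcongr; exact h.abs_le_two_zpow_log_add_one hk hnormal
    _ = s * 2 ^ Int.log 2 |r| + |z| * (ulp k r / 2) := by
        rw [zpow_add_one₀ two_ne_zero]; ring

lemma RN.mul_two_zpow_log_le_abs {s t x z : ℝ} (hs : 0 ≤ s) (ht : 1 ≤ t) (hk : 2 ≤ k)
    (h : RN emin k a r) (hnormal : (2 : ℝ) ^ (k - 1 + emin) ≤ |r|)
    (hx : |x - z * a| ≤ s / 2 * |a|) (hz : 2 * t * s ≤ |z|) :
    t * s * (2 : ℝ) ^ Int.log 2 |r| ≤ |x| := by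
  have htri := abs_sub_abs_le_abs_sub (z * a) x
  rw [abs_mul, abs_sub_comm] at htri
  calc t * s * 2 ^ Int.log 2 |r| ≤ 9 / 8 * (t * s * 2 ^ Int.log 2 |r|) :=
        le_mul_of_one_le_left (by positivity) (by norm_num)
    _ = 3 / 2 * t * s * (3 / 4 * 2 ^ Int.log 2 |r|) := by ring
    _ ≤ (2 * t - 1 / 2) * s * |a| := by
        gcongr
        · exact mul_nonneg (by linarith) hs
        · linarith
        · exact h.three_quarters_two_zpow_log_le_abs hk hnormal
    _ = 2 * t * s * |a| - s / 2 * |a| := by ring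
    _ ≤ |z| * |a| - s / 2 * |a| := by gcongr
    _ ≤ |x| := by linarith

/-- The bound `hr` says that `r` and `r * 2 ^ (-N)` both lie in the normal range at `k` bits. -/
theorem RN.isFPN_sub_mul {p ℓ N : ℤ} {x z : ℝ} (hk : 2 ≤ k) (hkp : k ≤ p) (hℓ : 2 ≤ ℓ)
    (hℓp : ℓ ≤ p) (hx : IsFPN emin p x) (h : RN emin k a r)
    (hr : (2 : ℝ) ^ (k - 1 + max 0 N + emin) ≤ |r|) (hz : z ∈ zmultiples ((2 : ℝ) ^ (-N)))
    (hz_lo : (2 : ℝ) ^ (ℓ - 1 - N) ≤ |z|) (hz_hi : |z| ≤ (2 : ℝ) ^ (ℓ - N))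
    (hxz : |x - z * a| ≤ (2 : ℝ) ^ (-N) / 2 * |a|) : IsFPN emin p (x - z * r) := by
  have hnormal : (2 : ℝ) ^ (k - 1 + emin) ≤ |r| :=
    (zpow_le_zpow_right₀ one_le_two (by lia)).trans hr
  have hlog := le_log_of_two_zpow_le hr
  set c := Int.log 2 |r|
  have hdiff : |x - z * r| ≤ 2 ^ (-N) * 2 ^ c + |z| * (2 ^ (c - k + 1) / 2) :=
    h.abs_sub_mul_le (by positivity) (by lia) hnormal hxz
  have hx_lo : (2 : ℝ) ^ (ℓ - 2 - N + c) ≤ |x| := by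
    have hz_two : 2 * (2 : ℝ) ^ (ℓ - 2) * 2 ^ (-N) ≤ |z| := by
      rwa [← zpow_one_add₀ two_ne_zero, ← zpow_add₀ two_ne_zero,
        show 1 + (ℓ - 2) + -N = ℓ - 1 - N by ring]
    rw [sub_eq_add_neg, zpow_add₀ two_ne_zero, zpow_add₀ two_ne_zero]
    exact h.mul_two_zpow_log_le_abs (by positivity) (one_le_zpow₀ one_le_two (by lia)) hk
      hnormal hxz hz_two
  have hzr : z * r ∈ zmultiples ((2 : ℝ) ^ (c - k + 1 - N)) := by
    rw [sub_eq_neg_add, zpow_add₀ two_ne_zero]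
    exact mul_mem_zmultiples_mul hz h.1.mem_zmultiples_ulp
  set e := min (max emin (ℓ - 2 - N + c - p + 1)) (c - k + 1 - N)
  have hmem : x - z * r ∈ zmultiples ((2 : ℝ) ^ e) :=
    sub_mem (zmultiples_two_zpow_le (min_le_left _ _) (hx.mem_zmultiples_two_zpow hx_lo))
      (zmultiples_two_zpow_le (min_le_right _ _) hzr)
  refine isFPN_of_mem_zmultiples (by lia) (by lia) hmem ?_
  calc |x - z * r| ≤ 2 ^ (-N) * 2 ^ c + |z| * (2 ^ (c - k + 1) / 2) := hdiff
    _ ≤ 2 ^ (-N) * 2 ^ c + 2 ^ (ℓ - N) * (2 ^ (c - k + 1) / 2) := by gcongr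
    _ = (1 + 2 ^ (ℓ - k)) * 2 ^ (c - N) := by
        simp only [zpow_sub₀ (two_ne_zero (α := ℝ)), zpow_add_one₀ (two_ne_zero (α := ℝ)), zpow_neg]
        ring
    _ ≤ 2 ^ (p + e - (c - N)) * 2 ^ (c - N) := by
        gcongr
        exact one_add_two_zpow_le (by lia) (by lia)
    _ = 2 ^ (p + e) := by rw [← zpow_add₀ two_ne_zero, sub_add_cancel]

end RoundToNearest

lemma abs_sub_mul_one_div_le {R s x z : ℝ} (hR : R ≠ 0) (h : |x * R - z| ≤ s) :
    |x - z * (1 / R)| ≤ s * |1 / R| := by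
  rw [show x - z * (1 / R) = (x * R - z) * (1 / R) by field_simp, abs_mul]
  gcongr

theorem Fmac_arg_reduct_correct1_general {p emin N q ℓ : ℤ} {x R C₁ z : ℝ}
    (hx : IsFPN emin p x) (hq1 : 0 ≤ q) (hq2 : q < p - 1)
    (hC₁ : RN emin (p - q) (1 / R) C₁)
    (hC₁big : (2 : ℝ) ^ (p - q - 1 + max 0 N) * (2 : ℝ) ^ emin ≤ |C₁|)
    (hℓ1 : 2 ≤ ℓ) (hℓ2 : ℓ ≤ p)
    (hzint : ∃ k : ℤ, z * (2 : ℝ) ^ N = (k : ℝ))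
    (hz1 : (2 : ℝ) ^ (ℓ - 1) ≤ |z * (2 : ℝ) ^ N|)
    (hz2 : |z * (2 : ℝ) ^ N| < (2 : ℝ) ^ ℓ)
    (hclose : |x * R - z| ≤ (2 : ℝ) ^ (-N - 1)) :
    IsFPN emin p (x - z * C₁) := by
  rw [← zpow_add₀ two_ne_zero] at hC₁big
  have hN : (0 : ℝ) < 2 ^ N := by positivity
  have hz_mem : z ∈ zmultiples ((2 : ℝ) ^ (-N)) := by
    obtain ⟨m, hm⟩ := hzint
    exact mem_zmultiples_iff.2 ⟨m, by rw [zsmul_eq_mul, ← hm, zpow_neg]; field_simp⟩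
  rw [abs_mul, abs_of_pos hN] at hz1 hz2
  have hnormal : (2 : ℝ) ^ (p - q - 1 + emin) ≤ |C₁| :=
    (zpow_le_zpow_right₀ one_le_two (by lia)).trans hC₁big
  have hR : R ≠ 0 := ne_zero_of_one_div_ne_zero (hC₁.ne_zero (by lia) hnormal)
  refine hC₁.isFPN_sub_mul (by lia) (by lia) hℓ1 hℓ2 hx hC₁big hz_mem ?_ ?_ ?_
  · rwa [zpow_sub₀ two_ne_zero, div_le_iff₀ hN]
  · rw [zpow_sub₀ two_ne_zero, le_div_iff₀ hN]
    exact hz2.le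
  · rw [zpow_sub_one₀ two_ne_zero, ← div_eq_mul_inv] at hclose
    exact abs_sub_mul_one_div_le hR hclose

/-- First reduction step is exact (Fmac_arg_reduct_correct1). -/
theorem Fmac_arg_reduct_correct1 (p emin N q ℓ : ℤ) (hp : 3 < p)
    (x R C₁ z : ℝ)
    (hx : IsFPN emin p x)
    (hRpos : 0 < R) (hRnorm : IsNormalFPN emin p R)
    (hq1 : 2 ≤ q) (hq2 : q < p - 1)
    (hC₁ : RN emin (p - q) (1 / R) C₁)
    (hC₁pow : ∀ j : ℤ, C₁ ≠ (2 : ℝ) ^ j)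
    (hC₁big : (2 : ℝ) ^ (p - q + max 1 (N - 1)) * (2 : ℝ) ^ emin ≤ C₁)
    (hℓ1 : 2 ≤ ℓ) (hℓ2 : ℓ ≤ p - 1) (hqℓ : q ≤ ℓ)
    (hzint : ∃ k : ℤ, z * (2 : ℝ) ^ N = (k : ℝ))
    (hz1 : (2 : ℝ) ^ (ℓ - 1) ≤ |z * (2 : ℝ) ^ N|)
    (hz2 : |z * (2 : ℝ) ^ N| < (2 : ℝ) ^ ℓ)
    (hclose : |x * R - z| ≤ (2 : ℝ) ^ (-N - 1)) :
    IsFPN emin p (x - z * C₁) :=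
  have hnormal : (2 : ℝ) ^ (p - q - 1 + max 0 N) * 2 ^ emin ≤ |C₁| :=
    .trans (by gcongr 2 ^ ?_ * _; exacts [one_le_two, by lia]) (hC₁big.trans (le_abs_self C₁))
  Fmac_arg_reduct_correct1_general hx (by lia) hq2 hC₁ hnormal hℓ1 (by lia) hzint hz1 hz2 hclose
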